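/- arXiv:2107.14803 — 3 statements merged into one kernel-verified Lean document; each statement's English description precedes it below -/
import Mathlib

section
/- Let n ≥ 1, let λ₁, …, λₙ > 0 be threshold values and let Λ = diag(λ₁, …, λₙ). Then for every invertible real n×n matrix P, every vector y ∈ ℝⁿ and every σ > 0, one has P φ_{λ₁σ, …, λₙσ}(P⁻¹ y) = (PΛ) φ_σ((PΛ)⁻¹ y). (Proposition 1: using multiple thresholds is equivalent to using a single threshold with a rescaled transform.) -/
/-- The hard shrinkage function: `x` if `|x| > λ`, else `0`. -/
noncomputable def hardShrink (l x : ℝ) : ℝ := if l < |x| then x else 0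

theorem hardShrink_abs_mul_mul (a l x : ℝ) :
    hardShrink (|a| * l) (a * x) = a * hardShrink l x := by
  rcases eq_or_ne a 0 with rfl | ha
  · simp [hardShrink]
  · simp only [hardShrink, abs_mul, mul_lt_mul_iff_right₀ (abs_pos.mpr ha), mul_ite, mul_zero]

open Matrix in
theorem hardShrink_diagonal_mulVec {ι : Type*} [Fintype ι] [DecidableEq ι] (d l x : ι → ℝ) :
    (fun i => hardShrink (|d i| * l i) ((diagonal d *ᵥ x) i)) =
      diagonal d *ᵥ fun i => hardShrink (l i) (x i) := by
  ext i
  simp only [mulVec_diagonal, hardShrink_abs_mul_mul]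

open Matrix in
/-- The inverse pair `P⁻¹`, `P` is replaced by an analysis matrix `Q` and a synthesis matrix `P`,
as for a redundant transform. -/
theorem multiple_thresholds_useless_general {ι κ μ : Type*} [Fintype ι] [DecidableEq ι] [Fintype κ]
    (d : ι → ℝ) (hd : ∀ i, d i ≠ 0) (P : Matrix μ ι ℝ) (Q : Matrix ι κ ℝ) (y : κ → ℝ) (σ : ℝ) :
    P *ᵥ (fun i => hardShrink (|d i| * σ) ((Q *ᵥ y) i)) =
      (P * diagonal d) *ᵥ fun i => hardShrink σ ((((diagonal d)⁻¹ * Q) *ᵥ y) i) := by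
  have hdet : IsUnit (diagonal d).det := by
    rw [det_diagonal, isUnit_iff_ne_zero]
    exact Finset.prod_ne_zero_iff.mpr fun i _ => hd i
  have hQ : Q *ᵥ y = diagonal d *ᵥ (((diagonal d)⁻¹ * Q) *ᵥ y) := by
    rw [mulVec_mulVec, mul_nonsing_inv_cancel_left _ _ hdet]
  rw [hQ, hardShrink_diagonal_mulVec d fun _ => σ, mulVec_mulVec]

/-- Proposition 1: using multiple thresholds `λᵢ σ` with transform `P` is equivalent to
using the single threshold `σ` with the rescaled transform `P Λ`, `Λ = diag(λ₁,…,λₙ)`. -/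
theorem multiple_thresholds_useless (n : ℕ) (hn : 1 ≤ n) (lam : Fin n → ℝ)
    (hlam : ∀ i, 0 < lam i) (P : Matrix (Fin n) (Fin n) ℝ) (hP : IsUnit P.det)
    (y : Fin n → ℝ) (σ : ℝ) (hσ : 0 < σ) :
    P.mulVec (fun i => hardShrink (lam i * σ) ((P⁻¹).mulVec y i)) =
      (P * Matrix.diagonal lam).mulVec
        (fun i => hardShrink σ (((P * Matrix.diagonal lam)⁻¹).mulVec y i)) := by
  simpa only [abs_of_pos (hlam _), Matrix.mul_inv_rev] using
    multiple_thresholds_useless_general lam (fun i => (hlam i).ne') P P⁻¹ y σ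
end

section
/- Let n ≥ 1 and let P be a real n×n orthogonal matrix, i.e., PᵀP = D for some invertible diagonal matrix D (necessarily with positive diagonal entries). Set λᵢ = √(D_{ii}) > 0 and Q = P (√D)⁻¹, where √D is the diagonal matrix with entries √(D_{ii}). Then Q is orthonormal, P = Q √D, and for all y ∈ ℝⁿ and all σ > 0, P φ_σ(P⁻¹ y) = Q φ_{λ₁σ, …, λₙσ}(Q⁻¹ y). (An orthogonal transform with a single threshold is equivalent to an orthonormal transform with per-coordinate thresholds.) -/
open Matrix

/-!
Hard shrinkage is positively homogeneous jointly in threshold and argument: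
`φ_{aλ}(a x) = a φ_λ(x)` for `a > 0`. Writing `P = Q S` with `S` diagonal and positive, so that
`Q⁻¹ = S P⁻¹`, one may therefore move `S` through the shrinkage at the price of rescaling the
thresholds. Orthonormality of `Q = P S⁻¹` only says that `PᵀP = SᵀS`.
-/

theorem hardShrink_mul_mul {a : ℝ} (ha : 0 < a) (l x : ℝ) :
    hardShrink (a * l) (a * x) = a * hardShrink l x := by
  simp only [hardShrink, abs_mul, abs_of_pos ha, mul_lt_mul_iff_right₀ ha, mul_ite, mul_zero]

section

variable {m n R : Type*} [Fintype m] [DecidableEq n]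

theorem pos_of_transpose_mul_self_eq_diagonal [Ring R] [LinearOrder R] [IsOrderedRing R]
    {P : Matrix m n R} {d : n → R} (h : Pᵀ * P = diagonal d) {i : n} (hi : d i ≠ 0) : 0 < d i := by
  have hd : d i = ∑ j, P j i * P j i := by
    simp only [← diagonal_apply_eq d i, ← h, mul_apply, transpose_apply]
  have hnonneg : 0 ≤ d i := hd ▸ Finset.sum_nonneg fun j _ => mul_self_nonneg (P j i)
  exact hnonneg.lt_of_ne' hi

theorem isUnit_det_diagonal_iff [Fintype n] [CommRing R] {d : n → R} :
    IsUnit (diagonal d).det ↔ ∀ i, IsUnit (d i) := by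
  rw [← isUnit_iff_isUnit_det, isUnit_diagonal, Pi.isUnit_iff]

theorem transpose_mul_inv_mul_mul_inv_eq_one [Fintype n] [CommRing R] {P : Matrix m n R}
    {S : Matrix n n R} (hS : IsUnit S.det) (h : Pᵀ * P = Sᵀ * S) :
    (P * S⁻¹)ᵀ * (P * S⁻¹) = 1 :=
  calc (P * S⁻¹)ᵀ * (P * S⁻¹) = (S⁻¹)ᵀ * (Pᵀ * P) * S⁻¹ := by
        simp only [transpose_mul, Matrix.mul_assoc]
    _ = (S * S⁻¹)ᵀ * (S * S⁻¹) := by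
        simp only [h, transpose_mul, Matrix.mul_assoc]
    _ = 1 := by
        rw [mul_nonsing_inv S hS, transpose_one, Matrix.one_mul]

end

section

variable {ι : Type*} [Fintype ι] [DecidableEq ι]

theorem mul_diagonal_mulVec_hardShrink (Q : Matrix ι ι ℝ) {s : ι → ℝ} (hs : ∀ i, 0 < s i)
    (t y : ι → ℝ) :
    (Q * diagonal s) *ᵥ (fun i => hardShrink (t i) (((Q * diagonal s)⁻¹ *ᵥ y) i)) =
      Q *ᵥ fun i => hardShrink (s i * t i) ((Q⁻¹ *ᵥ y) i) := by
  have hdet : IsUnit (diagonal s).det :=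
    isUnit_det_diagonal_iff.2 fun i => (hs i).ne'.isUnit
  have hQinv : Q⁻¹ = diagonal s * (Q * diagonal s)⁻¹ := by
    rw [Matrix.mul_inv_rev, mul_nonsing_inv_cancel_left _ _ hdet]
  rw [hQinv, ← mulVec_mulVec, ← mulVec_mulVec]
  congr 1
  funext i
  simp only [mulVec_diagonal, hardShrink_mul_mul (hs i)]

theorem orthogonal_single_threshold_eq_orthonormal_multi_general (P : Matrix ι ι ℝ) (d : ι → ℝ)
    (hD : Pᵀ * P = diagonal d) (hDinv : IsUnit (diagonal d).det) (Q : Matrix ι ι ℝ)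
    (hQ : Q = P * (diagonal fun i => √(d i))⁻¹) :
    (∀ i, 0 < √(d i)) ∧
    (Qᵀ * Q = 1 ∧ Q * Qᵀ = 1) ∧
    P = Q * diagonal (fun i => √(d i)) ∧
    ∀ (y : ι → ℝ) (σ : ℝ),
      P *ᵥ (fun i => hardShrink σ ((P⁻¹ *ᵥ y) i)) =
        Q *ᵥ (fun i => hardShrink (√(d i) * σ) ((Q⁻¹ *ᵥ y) i)) := by
  have hd (i : ι) : 0 < d i :=
    pos_of_transpose_mul_self_eq_diagonal hD (isUnit_det_diagonal_iff.1 hDinv i).ne_zero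
  have hs (i : ι) : 0 < √(d i) := Real.sqrt_pos.2 (hd i)
  have hdet : IsUnit (diagonal fun i => √(d i)).det :=
    isUnit_det_diagonal_iff.2 fun i => (hs i).ne'.isUnit
  have hgram : Pᵀ * P = (diagonal fun i => √(d i))ᵀ * diagonal fun i => √(d i) := by
    simp only [hD, diagonal_transpose, diagonal_mul_diagonal, Real.mul_self_sqrt (hd _).le]
  have hQQ : Qᵀ * Q = 1 := hQ ▸ transpose_mul_inv_mul_mul_inv_eq_one hdet hgram
  have hPQ : P = Q * diagonal fun i => √(d i) := by
    rw [hQ, nonsing_inv_mul_cancel_right _ _ hdet]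
  refine ⟨hs, ⟨hQQ, mul_eq_one_comm.1 hQQ⟩, hPQ, fun y σ => ?_⟩
  rw [hPQ]
  exact mul_diagonal_mulVec_hardShrink Q hs (fun _ => σ) y

end

/-- An orthogonal transform `P` (i.e. `PᵀP = D` with `D` an invertible diagonal matrix,
necessarily with positive diagonal entries) with a single threshold is equivalent to the
orthonormal transform `Q = P (√D)⁻¹` with per-coordinate thresholds `λᵢ = √(D_{ii})`:
`Q` is orthonormal, `P = Q √D`, the `λᵢ` are positive, and for all `y` and `σ > 0`,
`P φ_σ(P⁻¹ y) = Q φ_{λ₁σ,…,λₙσ}(Q⁻¹ y)`. -/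
theorem orthogonal_single_threshold_eq_orthonormal_multi (n : ℕ) (hn : 1 ≤ n)
    (P : Matrix (Fin n) (Fin n) ℝ) (d : Fin n → ℝ)
    (hD : Pᵀ * P = Matrix.diagonal d) (hDinv : IsUnit (Matrix.diagonal d).det)
    (Q : Matrix (Fin n) (Fin n) ℝ)
    (hQ : Q = P * (Matrix.diagonal fun i => Real.sqrt (d i))⁻¹) :
    (∀ i, 0 < Real.sqrt (d i)) ∧
    (Qᵀ * Q = 1 ∧ Q * Qᵀ = 1) ∧
    P = Q * Matrix.diagonal (fun i => Real.sqrt (d i)) ∧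
    ∀ (y : Fin n → ℝ) (σ : ℝ), 0 < σ →
      P.mulVec (fun i => hardShrink σ ((P⁻¹).mulVec y i)) =
        Q.mulVec (fun i => hardShrink (Real.sqrt (d i) * σ) ((Q⁻¹).mulVec y i)) := by
  obtain ⟨hs, hQQ, hPQ, hshrink⟩ :=
    orthogonal_single_threshold_eq_orthonormal_multi_general P d hD hDinv Q hQ
  exact ⟨hs, hQQ, hPQ, fun y σ _ => hshrink y σ⟩
end

section
/- Let P be an invertible real n×n matrix with singular value decomposition P = U Σ Vᵀ, where U and V are orthonormal n×n matrices and Σ is a diagonal matrix with strictly positive diagonal entries. Then Q₀ = U Vᵀ is the unique minimizer, over all orthonormal n×n matrices Q, of the Frobenius distance ‖P − Q‖_F. (The nearest orthonormal matrix to P in Frobenius norm is UVᵀ.) -/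
open Matrix

/-- The Frobenius norm of a real square matrix. -/
noncomputable def frobNorm {n : ℕ} (A : Matrix (Fin n) (Fin n) ℝ) : ℝ :=
  Real.sqrt (∑ i, ∑ j, (A i j) ^ 2)

/-!
Put `Q₀ = U Vᴴ` and `H = V Σ Vᴴ`, so that `P = Q₀ H` is a polar decomposition. If `Qᴴ Q = Q₀ᴴ Q₀`,
expanding and using cyclicity of the trace gives the exact formula
`‖P - Q‖² = ‖P - Q₀‖² + tr ((Q - Q₀) H (Q - Q₀)ᴴ)`. The last term is nonnegative when `H` is
positive semidefinite, and vanishes only at `Q = Q₀` when `H` is positive definite.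
-/

open scoped ComplexOrder

section Trace

variable {m n R 𝕜 : Type*} [Fintype m] [Fintype n] [CommRing R] [StarRing R] [RCLike 𝕜]

lemma trace_mul_mul_conjTranspose_eq_of_gram_eq {Q Q₀ : Matrix m n R} (H : Matrix n n R)
    (hQ : Qᴴ * Q = Q₀ᴴ * Q₀) : (Q * H * Qᴴ).trace = (Q₀ * H * Q₀ᴴ).trace := by
  rw [trace_mul_cycle Q, trace_mul_cycle Q₀, hQ]

lemma trace_polar_sub_mul_conjTranspose {Q Q₀ : Matrix m n R} {H : Matrix n n R}
    (hH : H.IsHermitian) (hQ : Qᴴ * Q = Q₀ᴴ * Q₀) :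
    ((Q₀ * H - Q) * (Q₀ * H - Q)ᴴ).trace =
      ((Q₀ * H - Q₀) * (Q₀ * H - Q₀)ᴴ).trace + ((Q - Q₀) * H * (Q - Q₀)ᴴ).trace := by
  have hQQ : (Q * Qᴴ).trace = (Q₀ * Q₀ᴴ).trace := by
    rw [trace_mul_comm, hQ, trace_mul_comm]
  have hQHQ := trace_mul_mul_conjTranspose_eq_of_gram_eq H hQ
  simp only [conjTranspose_sub, conjTranspose_mul, hH.eq, Matrix.sub_mul, Matrix.mul_sub,
    trace_sub, ← Matrix.mul_assoc, hQQ, hQHQ]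
  ring

open scoped MatrixOrder Matrix.Norms.L2Operator in
lemma trace_mul_mul_conjTranspose_eq_zero_iff {H : Matrix n n 𝕜} (hH : H.PosSemidef)
    (A : Matrix m n 𝕜) : (A * H * Aᴴ).trace = 0 ↔ A * H = 0 := by
  classical
  obtain ⟨B, rfl⟩ := CStarAlgebra.nonneg_iff_eq_star_mul_self.mp hH.nonneg
  have hsq : A * (Bᴴ * B) * Aᴴ = (A * Bᴴ) * (A * Bᴴ)ᴴ := by
    simp only [conjTranspose_mul, conjTranspose_conjTranspose, Matrix.mul_assoc]
  rw [star_eq_conjTranspose, hsq, trace_mul_conjTranspose_self_eq_zero_iff,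
    mul_conjTranspose_mul_self_eq_zero]

end Trace

section Frobenius

open scoped Matrix.Norms.Frobenius

variable {m n 𝕜 : Type*} [Fintype m] [Fintype n] [RCLike 𝕜]

lemma frobNorm_eq_norm {n : ℕ} (A : Matrix (Fin n) (Fin n) ℝ) : frobNorm A = ‖A‖ := by
  simp [frobNorm, frobenius_norm_def, Real.sqrt_eq_rpow]

lemma frobenius_norm_sq_eq_trace (A : Matrix m n 𝕜) :
    ((‖A‖ ^ 2 : ℝ) : 𝕜) = (A * Aᴴ).trace := by
  have hsq : ‖A‖ ^ 2 = ∑ i, ∑ j, ‖A i j‖ ^ 2 := by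
    rw [frobenius_norm_def, ← Real.sqrt_eq_rpow, Real.sq_sqrt (by positivity)]
    simp only [Real.rpow_two]
  simp [hsq, trace, mul_apply, RCLike.mul_conj]

variable {Q Q₀ : Matrix m n 𝕜} {H : Matrix n n 𝕜}

lemma norm_polar_sub_sq (hH : H.IsHermitian) (hQ : Qᴴ * Q = Q₀ᴴ * Q₀) :
    ((‖Q₀ * H - Q‖ ^ 2 : ℝ) : 𝕜) =
      (‖Q₀ * H - Q₀‖ ^ 2 : ℝ) + ((Q - Q₀) * H * (Q - Q₀)ᴴ).trace := by
  simpa only [frobenius_norm_sq_eq_trace] using trace_polar_sub_mul_conjTranspose hH hQ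

lemma norm_polar_sub_le (hH : H.PosSemidef) (hQ : Qᴴ * Q = Q₀ᴴ * Q₀) :
    ‖Q₀ * H - Q₀‖ ≤ ‖Q₀ * H - Q‖ := by
  rw [← sq_le_sq₀ (norm_nonneg _) (norm_nonneg _), ← RCLike.ofReal_le_ofReal (K := 𝕜),
    norm_polar_sub_sq hH.isHermitian hQ]
  exact le_add_of_nonneg_right (hH.mul_mul_conjTranspose_same _).trace_nonneg

lemma norm_polar_sub_eq_iff (hH : H.PosSemidef) (hQ : Qᴴ * Q = Q₀ᴴ * Q₀) :
    ‖Q₀ * H - Q‖ = ‖Q₀ * H - Q₀‖ ↔ Q * H = Q₀ * H := by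
  rw [← sq_eq_sq₀ (norm_nonneg _) (norm_nonneg _), ← RCLike.ofReal_inj (K := 𝕜),
    norm_polar_sub_sq hH.isHermitian hQ, add_eq_left,
    trace_mul_mul_conjTranspose_eq_zero_iff hH, Matrix.sub_mul, sub_eq_zero]

lemma eq_of_norm_polar_sub_eq (hH : H.PosDef) (hQ : Qᴴ * Q = Q₀ᴴ * Q₀)
    (h : ‖Q₀ * H - Q‖ = ‖Q₀ * H - Q₀‖) : Q = Q₀ := by
  classical
  let _ := hH.isUnit.invertible
  exact mul_left_injective_of_invertible H ((norm_polar_sub_eq_iff hH.posSemidef hQ).mp h)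

theorem nearest_orthonormal_matrix_general [DecidableEq n] (P U : Matrix m n 𝕜)
    (V : Matrix n n 𝕜) (s : n → 𝕜) (hs : ∀ i, 0 ≤ s i) (hU : Uᴴ * U = 1) (hV : Vᴴ * V = 1)
    (hSVD : P = U * diagonal s * Vᴴ) :
    (U * Vᴴ)ᴴ * (U * Vᴴ) = 1 ∧
    (∀ Q : Matrix m n 𝕜, Qᴴ * Q = 1 → ‖P - U * Vᴴ‖ ≤ ‖P - Q‖) ∧
    ((∀ i, 0 < s i) → ∀ Q : Matrix m n 𝕜, Qᴴ * Q = 1 →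
      ‖P - Q‖ = ‖P - U * Vᴴ‖ → Q = U * Vᴴ) := by
  have hV' : V * Vᴴ = 1 := mul_eq_one_comm.mp hV
  have hgram : (U * Vᴴ)ᴴ * (U * Vᴴ) = 1 := by
    rw [conjTranspose_mul, conjTranspose_conjTranspose, Matrix.mul_assoc, ← Matrix.mul_assoc Uᴴ,
      hU, Matrix.one_mul, hV']
  have hpolar : P = U * Vᴴ * (V * diagonal s * Vᴴ) := by
    rw [hSVD, Matrix.mul_assoc U Vᴴ, ← Matrix.mul_assoc Vᴴ, ← Matrix.mul_assoc Vᴴ, hV,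
      Matrix.one_mul, Matrix.mul_assoc]
  rw [hpolar]
  refine ⟨hgram, fun Q hQ ↦ ?_, fun hpos Q hQ h ↦ ?_⟩
  · have hH := (posSemidef_diagonal_iff.mpr hs).mul_mul_conjTranspose_same V
    exact norm_polar_sub_le hH (hQ.trans hgram.symm)
  · have hH := (PosDef.diagonal hpos).mul_mul_conjTranspose_same
      (vecMul_injective_of_isUnit (IsUnit.of_mul_eq_one _ hV'))
    exact eq_of_norm_polar_sub_eq hH (hQ.trans hgram.symm) h

end Frobenius

/-- Nearest orthonormal matrix: if `P = U Σ Vᵀ` is a singular value decomposition of the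
invertible matrix `P` (`U, V` orthonormal, `Σ` diagonal with strictly positive entries),
then `Q₀ = U Vᵀ` is the unique minimizer of the Frobenius distance `‖P − Q‖_F` over all
orthonormal matrices `Q`. -/
theorem nearest_orthonormal_matrix (n : ℕ) (P U V : Matrix (Fin n) (Fin n) ℝ)
    (s : Fin n → ℝ) (hs : ∀ i, 0 < s i)
    (hU : Uᵀ * U = 1 ∧ U * Uᵀ = 1) (hV : Vᵀ * V = 1 ∧ V * Vᵀ = 1)
    (hP : IsUnit P.det) (hSVD : P = U * Matrix.diagonal s * Vᵀ) :
    ((U * Vᵀ)ᵀ * (U * Vᵀ) = 1 ∧ (U * Vᵀ) * (U * Vᵀ)ᵀ = 1) ∧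
    (∀ Q : Matrix (Fin n) (Fin n) ℝ, Qᵀ * Q = 1 → Q * Qᵀ = 1 →
      frobNorm (P - U * Vᵀ) ≤ frobNorm (P - Q)) ∧
    (∀ Q : Matrix (Fin n) (Fin n) ℝ, Qᵀ * Q = 1 → Q * Qᵀ = 1 →
      frobNorm (P - Q) = frobNorm (P - U * Vᵀ) → Q = U * Vᵀ) := by
  -- Over `ℝ`, `Aᴴ` and `Aᵀ` are definitionally equal.
  obtain ⟨horth, hmin, huniq⟩ :=
    nearest_orthonormal_matrix_general P U V s (fun i ↦ (hs i).le) hU.1 hV.1 hSVD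
  simp only [frobNorm_eq_norm]
  exact ⟨⟨horth, mul_eq_one_comm.mp horth⟩, fun Q hQ _ ↦ hmin Q hQ, fun Q hQ _ ↦ huniq hs Q hQ⟩
end
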